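/- For every (i,j) ∈ Λ, the simple 2-dimensional module V_{i,j} is a projective left D-module (equivalently, V_{i,j} is its own projective cover). -/

import Mathlib

open scoped TensorProduct

/-- Generators of the Drinfeld double `D = D(K^cop)`. -/
inductive DGen : Type
  | a | b | c | d | x | g

open FreeAlgebra in
/-- The defining relations of the algebra `D = D(K^cop)`. -/
inductive DRel (𝕜 : Type) [Field 𝕜] (ξ ν : 𝕜) :
    FreeAlgebra 𝕜 DGen → FreeAlgebra 𝕜 DGen → Prop
  | ab : DRel 𝕜 ξ ν (ι 𝕜 DGen.a * ι 𝕜 DGen.b) (ξ • (ι 𝕜 DGen.b * ι 𝕜 DGen.a))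
  | ac : DRel 𝕜 ξ ν (ι 𝕜 DGen.a * ι 𝕜 DGen.c) (ξ • (ι 𝕜 DGen.c * ι 𝕜 DGen.a))
  | cb : DRel 𝕜 ξ ν (ι 𝕜 DGen.c * ι 𝕜 DGen.b) 0
  | bc : DRel 𝕜 ξ ν (ι 𝕜 DGen.b * ι 𝕜 DGen.c) 0
  | cd : DRel 𝕜 ξ ν (ι 𝕜 DGen.c * ι 𝕜 DGen.d) (ξ • (ι 𝕜 DGen.d * ι 𝕜 DGen.c))
  | bd : DRel 𝕜 ξ ν (ι 𝕜 DGen.b * ι 𝕜 DGen.d) (ξ • (ι 𝕜 DGen.d * ι 𝕜 DGen.b))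
  | adcomm : DRel 𝕜 ξ ν (ι 𝕜 DGen.a * ι 𝕜 DGen.d) (ι 𝕜 DGen.d * ι 𝕜 DGen.a)
  | adone : DRel 𝕜 ξ ν (ι 𝕜 DGen.a * ι 𝕜 DGen.d) 1
  | bsq : DRel 𝕜 ξ ν (ι 𝕜 DGen.b * ι 𝕜 DGen.b) 0
  | csq : DRel 𝕜 ξ ν (ι 𝕜 DGen.c * ι 𝕜 DGen.c) 0
  | aac : DRel 𝕜 ξ ν (ι 𝕜 DGen.a * ι 𝕜 DGen.a * ι 𝕜 DGen.c) (ι 𝕜 DGen.b)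
  | afour : DRel 𝕜 ξ ν (ι 𝕜 DGen.a ^ 4) 1
  | gfour : DRel 𝕜 ξ ν (ι 𝕜 DGen.g ^ 4) 1
  | xsq : DRel 𝕜 ξ ν (ι 𝕜 DGen.x * ι 𝕜 DGen.x) (ι 𝕜 DGen.g * ι 𝕜 DGen.g - 1)
  | gx : DRel 𝕜 ξ ν (ι 𝕜 DGen.g * ι 𝕜 DGen.x) (-(ι 𝕜 DGen.x * ι 𝕜 DGen.g))
  | ag : DRel 𝕜 ξ ν (ι 𝕜 DGen.a * ι 𝕜 DGen.g) (ι 𝕜 DGen.g * ι 𝕜 DGen.a)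
  | bg : DRel 𝕜 ξ ν (ι 𝕜 DGen.b * ι 𝕜 DGen.g) (-(ι 𝕜 DGen.g * ι 𝕜 DGen.b))
  | cg : DRel 𝕜 ξ ν (ι 𝕜 DGen.c * ι 𝕜 DGen.g) (-(ι 𝕜 DGen.g * ι 𝕜 DGen.c))
  | dg : DRel 𝕜 ξ ν (ι 𝕜 DGen.d * ι 𝕜 DGen.g) (ι 𝕜 DGen.g * ι 𝕜 DGen.d)
  | axr : DRel 𝕜 ξ ν (ι 𝕜 DGen.a * ι 𝕜 DGen.x)
      ((ν * ξ) • (ι 𝕜 DGen.b + ι 𝕜 DGen.g * ι 𝕜 DGen.c) - ξ • (ι 𝕜 DGen.x * ι 𝕜 DGen.a))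
  | bxr : DRel 𝕜 ξ ν (ι 𝕜 DGen.b * ι 𝕜 DGen.x)
      ((ν * ξ) • (ι 𝕜 DGen.a - ι 𝕜 DGen.g * ι 𝕜 DGen.d) + ξ • (ι 𝕜 DGen.x * ι 𝕜 DGen.b))
  | cxr : DRel 𝕜 ξ ν (ι 𝕜 DGen.c * ι 𝕜 DGen.x)
      ((ν * ξ) • (ι 𝕜 DGen.d - ι 𝕜 DGen.g * ι 𝕜 DGen.a) - ξ • (ι 𝕜 DGen.x * ι 𝕜 DGen.c))
  | dxr : DRel 𝕜 ξ ν (ι 𝕜 DGen.d * ι 𝕜 DGen.x)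
      ((ν * ξ) • (ι 𝕜 DGen.c + ι 𝕜 DGen.g * ι 𝕜 DGen.b) + ξ • (ι 𝕜 DGen.x * ι 𝕜 DGen.d))

/-- The Drinfeld double `D = D(K^cop)`, presented by generators and relations. -/
abbrev DAlg (𝕜 : Type) [Field 𝕜] (ξ ν : 𝕜) : Type := RingQuot (DRel 𝕜 ξ ν)

variable (𝕜 : Type) [Field 𝕜] (ξ ν : 𝕜)

/-- The generator `a` of `D`. -/
noncomputable def gA : DAlg 𝕜 ξ ν := RingQuot.mkAlgHom 𝕜 (DRel 𝕜 ξ ν) (FreeAlgebra.ι 𝕜 DGen.a)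
/-- The generator `b` of `D`. -/
noncomputable def gB : DAlg 𝕜 ξ ν := RingQuot.mkAlgHom 𝕜 (DRel 𝕜 ξ ν) (FreeAlgebra.ι 𝕜 DGen.b)
/-- The generator `c` of `D`. -/
noncomputable def gC : DAlg 𝕜 ξ ν := RingQuot.mkAlgHom 𝕜 (DRel 𝕜 ξ ν) (FreeAlgebra.ι 𝕜 DGen.c)
/-- The generator `d` of `D`. -/
noncomputable def gD : DAlg 𝕜 ξ ν := RingQuot.mkAlgHom 𝕜 (DRel 𝕜 ξ ν) (FreeAlgebra.ι 𝕜 DGen.d)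
/-- The generator `x` of `D`. -/
noncomputable def gX : DAlg 𝕜 ξ ν := RingQuot.mkAlgHom 𝕜 (DRel 𝕜 ξ ν) (FreeAlgebra.ι 𝕜 DGen.x)
/-- The generator `g` of `D`. -/
noncomputable def gG : DAlg 𝕜 ξ ν := RingQuot.mkAlgHom 𝕜 (DRel 𝕜 ξ ν) (FreeAlgebra.ι 𝕜 DGen.g)

variable {𝕜 ξ ν}
variable {V W : Type} [AddCommGroup V] [Module 𝕜 V] [AddCommGroup W] [Module 𝕜 W]

/-- A `𝕜`-subspace is invariant under a representation of `D`. -/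
def DInvariant (ρ : DAlg 𝕜 ξ ν →ₐ[𝕜] Module.End 𝕜 V) (U : Submodule 𝕜 V) : Prop :=
  ∀ z : DAlg 𝕜 ξ ν, ∀ w ∈ U, ρ z w ∈ U

/-- A representation of `D` is simple (the corresponding `D`-module is simple). -/
def DSimpleRep (ρ : DAlg 𝕜 ξ ν →ₐ[𝕜] Module.End 𝕜 V) : Prop :=
  Nontrivial V ∧ ∀ U : Submodule 𝕜 V, DInvariant ρ U → U = ⊥ ∨ U = ⊤

/-- A representation of `D` is indecomposable. -/
def DIndecRep (ρ : DAlg 𝕜 ξ ν →ₐ[𝕜] Module.End 𝕜 V) : Prop :=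
  Nontrivial V ∧ ∀ U₁ U₂ : Submodule 𝕜 V, DInvariant ρ U₁ → DInvariant ρ U₂ →
    IsCompl U₁ U₂ → U₁ = ⊥ ∨ U₂ = ⊥

/-- The vector `v` spans a copy of the character `χ^j` inside a representation of `D`:
the generators act on `v` by the scalars `χ^j(a) = ξ^j`, `χ^j(b) = χ^j(c) = χ^j(x) = 0`,
`χ^j(d) = ξ^{-j}`, `χ^j(g) = (-1)^j`. -/
def ChiOn (ρ : DAlg 𝕜 ξ ν →ₐ[𝕜] Module.End 𝕜 V) (j : ZMod 4) (v : V) : Prop :=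
  ρ (gA 𝕜 ξ ν) v = ξ ^ j.val • v ∧ ρ (gB 𝕜 ξ ν) v = 0 ∧ ρ (gC 𝕜 ξ ν) v = 0 ∧
  ρ (gD 𝕜 ξ ν) v = (ξ ^ j.val)⁻¹ • v ∧ ρ (gX 𝕜 ξ ν) v = 0 ∧
  ρ (gG 𝕜 ξ ν) v = (-1 : 𝕜) ^ j.val • v

/-- The pair `(e₁, e₂)` realizes the defining action of the module `V_{i,j}`. -/
def VijOn (ρ : DAlg 𝕜 ξ ν →ₐ[𝕜] Module.End 𝕜 V) (i j : ZMod 4) (e₁ e₂ : V) : Prop :=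
  ρ (gA 𝕜 ξ ν) e₁ = ξ ^ i.val • e₁ ∧ ρ (gA 𝕜 ξ ν) e₂ = ξ ^ (i.val + 3) • e₂ ∧
  ρ (gB 𝕜 ξ ν) e₁ = 0 ∧ ρ (gB 𝕜 ξ ν) e₂ = (-1 : 𝕜) ^ i.val • e₁ ∧
  ρ (gC 𝕜 ξ ν) e₁ = 0 ∧ ρ (gC 𝕜 ξ ν) e₂ = e₁ ∧
  ρ (gD 𝕜 ξ ν) e₁ = (ξ ^ i.val)⁻¹ • e₁ ∧ ρ (gD 𝕜 ξ ν) e₂ = (ξ * (ξ ^ i.val)⁻¹) • e₂ ∧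
  ρ (gG 𝕜 ξ ν) e₁ = ξ ^ j.val • e₁ ∧ ρ (gG 𝕜 ξ ν) e₂ = ξ ^ (j.val + 2) • e₂ ∧
  ρ (gX 𝕜 ξ ν) e₁ = (ν * ξ * (ξ ^ (3 * i.val) - ξ ^ (i.val + j.val))) • e₂ ∧
  ρ (gX 𝕜 ξ ν) e₂ = (ν * ξ / 2 * (ξ ^ i.val + ξ ^ (3 * i.val + j.val))) • e₁

/-- The tuple `p` realizes the defining action of the module `P(ℓ) = P ⊗ k_{χ^ℓ}`
(`P = P(0)` being the projective cover of the trivial module). -/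
def POn (ρ : DAlg 𝕜 ξ ν →ₐ[𝕜] Module.End 𝕜 V) (ℓ : ZMod 4) (p : Fin 4 → V) : Prop :=
  ρ (gA 𝕜 ξ ν) (p 0) = ξ ^ ℓ.val • p 0 ∧ ρ (gA 𝕜 ξ ν) (p 1) = -(ξ ^ (ℓ.val + 1)) • p 1 ∧
  ρ (gA 𝕜 ξ ν) (p 2) = ξ ^ (ℓ.val + 1) • p 2 ∧ ρ (gA 𝕜 ξ ν) (p 3) = ξ ^ ℓ.val • p 3 ∧
  ρ (gB 𝕜 ξ ν) (p 0) = ξ ^ ℓ.val • p 2 ∧ ρ (gB 𝕜 ξ ν) (p 1) = ξ ^ (ℓ.val + 1) • p 3 ∧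
  ρ (gB 𝕜 ξ ν) (p 2) = 0 ∧ ρ (gB 𝕜 ξ ν) (p 3) = 0 ∧
  ρ (gC 𝕜 ξ ν) (p 0) = -((ξ ^ ℓ.val)⁻¹) • p 2 ∧
  ρ (gC 𝕜 ξ ν) (p 1) = (ξ * (ξ ^ ℓ.val)⁻¹) • p 3 ∧
  ρ (gC 𝕜 ξ ν) (p 2) = 0 ∧ ρ (gC 𝕜 ξ ν) (p 3) = 0 ∧
  ρ (gD 𝕜 ξ ν) (p 0) = (ξ ^ ℓ.val)⁻¹ • p 0 ∧
  ρ (gD 𝕜 ξ ν) (p 1) = (ξ * (ξ ^ ℓ.val)⁻¹) • p 1 ∧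
  ρ (gD 𝕜 ξ ν) (p 2) = -(ξ * (ξ ^ ℓ.val)⁻¹) • p 2 ∧
  ρ (gD 𝕜 ξ ν) (p 3) = (ξ ^ ℓ.val)⁻¹ • p 3 ∧
  ρ (gX 𝕜 ξ ν) (p 0) = p 1 + ν • p 2 ∧ ρ (gX 𝕜 ξ ν) (p 1) = -(ν • p 3) ∧
  ρ (gX 𝕜 ξ ν) (p 2) = p 3 ∧ ρ (gX 𝕜 ξ ν) (p 3) = 0 ∧
  ρ (gG 𝕜 ξ ν) (p 0) = (-1 : 𝕜) ^ ℓ.val • p 0 ∧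
  ρ (gG 𝕜 ξ ν) (p 1) = -((-1 : 𝕜) ^ ℓ.val) • p 1 ∧
  ρ (gG 𝕜 ξ ν) (p 2) = -((-1 : 𝕜) ^ ℓ.val) • p 2 ∧
  ρ (gG 𝕜 ξ ν) (p 3) = (-1 : 𝕜) ^ ℓ.val • p 3

/-- `ρT` is the tensor product representation of `ρM` and `ρN` on `M ⊗ N`, where the action
of `D` on a tensor product is given through the coproduct of the Drinfeld double:
`a ↦ a⊗a + c⊗b`, `b ↦ b⊗a + d⊗b`, `c ↦ a⊗c + c⊗d`, `d ↦ b⊗c + d⊗d`, `g ↦ g⊗g`,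
`x ↦ x⊗1 + g⊗x`. -/
def TensorRepOn (ρM : DAlg 𝕜 ξ ν →ₐ[𝕜] Module.End 𝕜 V) (ρN : DAlg 𝕜 ξ ν →ₐ[𝕜] Module.End 𝕜 W)
    (ρT : DAlg 𝕜 ξ ν →ₐ[𝕜] Module.End 𝕜 (V ⊗[𝕜] W)) : Prop :=
  ρT (gA 𝕜 ξ ν) = TensorProduct.map (ρM (gA 𝕜 ξ ν)) (ρN (gA 𝕜 ξ ν)) +
      TensorProduct.map (ρM (gC 𝕜 ξ ν)) (ρN (gB 𝕜 ξ ν)) ∧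
  ρT (gB 𝕜 ξ ν) = TensorProduct.map (ρM (gB 𝕜 ξ ν)) (ρN (gA 𝕜 ξ ν)) +
      TensorProduct.map (ρM (gD 𝕜 ξ ν)) (ρN (gB 𝕜 ξ ν)) ∧
  ρT (gC 𝕜 ξ ν) = TensorProduct.map (ρM (gA 𝕜 ξ ν)) (ρN (gC 𝕜 ξ ν)) +
      TensorProduct.map (ρM (gC 𝕜 ξ ν)) (ρN (gD 𝕜 ξ ν)) ∧
  ρT (gD 𝕜 ξ ν) = TensorProduct.map (ρM (gB 𝕜 ξ ν)) (ρN (gC 𝕜 ξ ν)) +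
      TensorProduct.map (ρM (gD 𝕜 ξ ν)) (ρN (gD 𝕜 ξ ν)) ∧
  ρT (gG 𝕜 ξ ν) = TensorProduct.map (ρM (gG 𝕜 ξ ν)) (ρN (gG 𝕜 ξ ν)) ∧
  ρT (gX 𝕜 ξ ν) = TensorProduct.map (ρM (gX 𝕜 ξ ν)) LinearMap.id +
      TensorProduct.map (ρM (gG 𝕜 ξ ν)) (ρN (gX 𝕜 ξ ν))

/-!
Every representation of `D` carries idempotents projecting onto the simultaneous eigenspaces of
`a` and `g`, and `c² = 0`; since `c` carries each of these eigenspaces into another, any vector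
`c w` can be projected to a highest weight vector: one killed by `c` on which `a` and `g` act by
prescribed scalars. As `e₁ = c e₂` in `V_{i,j}`, the vector `e₁` lifts along any surjection to a
highest weight vector `v` of the same weight.

From `c x v = s v`, with `s ≠ 0` exactly because `2i ≠ j`, together with `x² = g² - 1`, the defining
relations force `(v, s⁻¹ x v)` to realize the action of `V_{i,j}`. So `e₁ ↦ v`, `e₂ ↦ s⁻¹ x v`
is a `D`-linear section.
-/

section RootsOfUnity

variable {R M : Type*} [CommRing R] [CommMonoid M]

theorem sq_eq_neg_one_of_isPrimitiveRoot_four [NoZeroDivisors R] {ζ : R}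
    (hζ : IsPrimitiveRoot ζ 4) : ζ ^ 2 = -1 :=
  (hζ.pow (b := 2) (by norm_num) (by norm_num)).eq_neg_one_of_two_right

theorem four_ne_zero_of_isPrimitiveRoot_four [IsDomain R] {ζ : R} (hζ : IsPrimitiveRoot ζ 4) :
    (4 : R) ≠ 0 :=
  mod_cast hζ.neZero'.ne

theorem pow_pow_eq_one_of_pow_eq_one {n : ℕ} {ζ : M} (hζ : ζ ^ n = 1) (k : ℕ) :
    (ζ ^ k) ^ n = 1 := by
  rw [pow_right_comm, hζ, one_pow]

theorem pow_zmod_val_injective {n : ℕ} [NeZero n] {ζ : M} (hζ : IsPrimitiveRoot ζ n) :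
    Function.Injective fun k : ZMod n => ζ ^ k.val := fun _ _ h =>
  ZMod.val_injective n (hζ.pow_inj (ZMod.val_lt _) (ZMod.val_lt _) h)

theorem pow_zmod_val_mul {n : ℕ} {ζ : M} (hζ : ζ ^ n = 1) (k l : ZMod n) :
    ζ ^ (k * l).val = (ζ ^ l.val) ^ k.val := by
  rw [ZMod.val_mul, ← pow_eq_pow_mod _ hζ, mul_comm, pow_mul]

end RootsOfUnity

section EigenProjector

variable {K A B : Type*} [Field K] [Ring A] [Algebra K A] [Ring B] [Algebra K B]

/-- The average of the powers of `l⁻¹ t`. If `t ^ n = l ^ n` with `n` and `l` nonzero in `K`, it is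
the idempotent projecting onto the `l`-eigenspace of `t`. -/
noncomputable def eigenProjector (n : ℕ) (l : K) (t : A) : A :=
  (n : K)⁻¹ • ∑ k ∈ Finset.range n, (l⁻¹ • t) ^ k

theorem mul_eigenProjector {n : ℕ} {l : K} {t : A} (hl : l ≠ 0) (ht : t ^ n = l ^ n • 1) :
    t * eigenProjector n l t = l • eigenProjector n l t := by
  have hu : (l⁻¹ • t) ^ n = 1 := by
    rw [smul_pow, ht, smul_smul, ← mul_pow, inv_mul_cancel₀ hl, one_pow, one_smul]
  have hsum := mul_neg_geom_sum (l⁻¹ • t) n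
  rw [hu, sub_self, sub_mul, one_mul, sub_eq_zero, smul_mul_assoc, eq_inv_smul_iff₀ hl] at hsum
  rw [eigenProjector, mul_smul_comm, ← hsum, smul_comm]

theorem semiconjBy_eigenProjector {y t t' : A} (h : SemiconjBy y t t') (n : ℕ) (l : K) :
    SemiconjBy y (eigenProjector n l t) (eigenProjector n l t') := by
  refine SemiconjBy.smul_right ?_ _
  simp only [SemiconjBy, Finset.mul_sum, Finset.sum_mul, ((h.smul_right l⁻¹).pow_right _).eq]

theorem map_eigenProjector (f : A →ₐ[K] B) (n : ℕ) (l : K) (t : A) :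
    f (eigenProjector n l t) = eigenProjector n l (f t) := by
  simp only [eigenProjector, map_smul, map_sum, map_pow]

theorem eigenProjector_apply_of_eigenvector {M : Type*} [AddCommGroup M] [Module K M] {n : ℕ}
    {l : K} {T : Module.End K M} {v : M} (hn : (n : K) ≠ 0) (hl : l ≠ 0) (hv : T v = l • v) :
    eigenProjector n l T v = v := by
  have hfix : (l⁻¹ • T) v = v := by rw [LinearMap.smul_apply, hv, inv_smul_smul₀ hl]
  have hpow (k : ℕ) : ((l⁻¹ • T) ^ k) v = v := by
    rw [Module.End.pow_apply, Function.iterate_fixed hfix]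
  simp only [eigenProjector, LinearMap.smul_apply, LinearMap.sum_apply, hpow, Finset.sum_const,
    Finset.card_range, ← Nat.cast_smul_eq_nsmul K, inv_smul_smul₀ hn]

end EigenProjector

theorem intertwines_of_forall_generator {R X : Type*} [CommRing R]
    {r : FreeAlgebra R X → FreeAlgebra R X → Prop} {M N : Type*} [AddCommGroup M] [Module R M]
    [AddCommGroup N] [Module R N] {ρM : RingQuot r →ₐ[R] Module.End R M}
    {ρN : RingQuot r →ₐ[R] Module.End R N} {σ : M →ₗ[R] N}
    (h : ∀ t v, σ (ρM (RingQuot.mkAlgHom R r (FreeAlgebra.ι R t)) v) =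
      ρN (RingQuot.mkAlgHom R r (FreeAlgebra.ι R t)) (σ v)) (z : RingQuot r) (v : M) :
    σ (ρM z v) = ρN z (σ v) := by
  obtain ⟨y, rfl⟩ := RingQuot.mkAlgHom_surjective R r z
  induction y using FreeAlgebra.induction generalizing v with
  | grade0 c => simp
  | grade1 t => exact h t v
  | mul p q hp hq => simp [hp, hq]
  | add p q hp hq => simp [hp, hq]

section Relations

theorem gA_mul_gC : gA 𝕜 ξ ν * gC 𝕜 ξ ν = ξ • (gC 𝕜 ξ ν * gA 𝕜 ξ ν) := by
  simpa [gA, gC] using RingQuot.mkAlgHom_rel 𝕜 (DRel.ac (ξ := ξ) (ν := ν))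

theorem gC_mul_gC : gC 𝕜 ξ ν * gC 𝕜 ξ ν = 0 := by
  simpa [gC] using RingQuot.mkAlgHom_rel 𝕜 (DRel.csq (ξ := ξ) (ν := ν))

theorem gA_mul_gA_mul_gC : gA 𝕜 ξ ν * gA 𝕜 ξ ν * gC 𝕜 ξ ν = gB 𝕜 ξ ν := by
  simpa [gA, gB, gC] using RingQuot.mkAlgHom_rel 𝕜 (DRel.aac (ξ := ξ) (ν := ν))

theorem gA_pow_four : gA 𝕜 ξ ν ^ 4 = 1 := by
  simpa [gA] using RingQuot.mkAlgHom_rel 𝕜 (DRel.afour (ξ := ξ) (ν := ν))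

theorem gG_pow_four : gG 𝕜 ξ ν ^ 4 = 1 := by
  simpa [gG] using RingQuot.mkAlgHom_rel 𝕜 (DRel.gfour (ξ := ξ) (ν := ν))

theorem gD_mul_gA : gD 𝕜 ξ ν * gA 𝕜 ξ ν = 1 := by
  have hcomm := RingQuot.mkAlgHom_rel 𝕜 (DRel.adcomm (ξ := ξ) (ν := ν))
  have hone := RingQuot.mkAlgHom_rel 𝕜 (DRel.adone (ξ := ξ) (ν := ν))
  simpa [gA, gD] using hcomm.symm.trans hone

theorem gA_mul_gG : gA 𝕜 ξ ν * gG 𝕜 ξ ν = gG 𝕜 ξ ν * gA 𝕜 ξ ν := by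
  simpa [gA, gG] using RingQuot.mkAlgHom_rel 𝕜 (DRel.ag (ξ := ξ) (ν := ν))

theorem gC_mul_gG : gC 𝕜 ξ ν * gG 𝕜 ξ ν = -(gG 𝕜 ξ ν * gC 𝕜 ξ ν) := by
  simpa [gC, gG] using RingQuot.mkAlgHom_rel 𝕜 (DRel.cg (ξ := ξ) (ν := ν))

theorem gX_mul_gX : gX 𝕜 ξ ν * gX 𝕜 ξ ν = gG 𝕜 ξ ν * gG 𝕜 ξ ν - 1 := by
  simpa [gX, gG] using RingQuot.mkAlgHom_rel 𝕜 (DRel.xsq (ξ := ξ) (ν := ν))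

theorem gG_mul_gX : gG 𝕜 ξ ν * gX 𝕜 ξ ν = -(gX 𝕜 ξ ν * gG 𝕜 ξ ν) := by
  simpa [gG, gX] using RingQuot.mkAlgHom_rel 𝕜 (DRel.gx (ξ := ξ) (ν := ν))

theorem gA_mul_gX : gA 𝕜 ξ ν * gX 𝕜 ξ ν =
    (ν * ξ) • (gB 𝕜 ξ ν + gG 𝕜 ξ ν * gC 𝕜 ξ ν) - ξ • (gX 𝕜 ξ ν * gA 𝕜 ξ ν) := by
  simpa [gA, gB, gC, gG, gX] using RingQuot.mkAlgHom_rel 𝕜 (DRel.axr (ξ := ξ) (ν := ν))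

theorem gC_mul_gX : gC 𝕜 ξ ν * gX 𝕜 ξ ν =
    (ν * ξ) • (gD 𝕜 ξ ν - gG 𝕜 ξ ν * gA 𝕜 ξ ν) - ξ • (gX 𝕜 ξ ν * gC 𝕜 ξ ν) := by
  simpa [gA, gC, gD, gG, gX] using RingQuot.mkAlgHom_rel 𝕜 (DRel.cxr (ξ := ξ) (ν := ν))

end Relations

theorem gD_apply_of_gA_apply {ρ : DAlg 𝕜 ξ ν →ₐ[𝕜] Module.End 𝕜 V} {l : 𝕜} {v : V} (hl : l ≠ 0)
    (hv : ρ (gA 𝕜 ξ ν) v = l • v) : ρ (gD 𝕜 ξ ν) v = l⁻¹ • v := by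
  rw [eq_inv_smul_iff₀ hl, ← map_smul, ← hv, ← Module.End.mul_apply, ← map_mul, gD_mul_gA, map_one,
    Module.End.one_apply]

/-- `v` is a highest weight vector of weight `(l, m)`: it is killed by `c`, which plays the role of
the raising operator opposite to `x`, and `a` and `g` act on it by `l` and `m`. -/
structure IsHighestWeight (ρ : DAlg 𝕜 ξ ν →ₐ[𝕜] Module.End 𝕜 V) (l m : 𝕜) (v : V) : Prop where
  gC_apply : ρ (gC 𝕜 ξ ν) v = 0
  gA_apply : ρ (gA 𝕜 ξ ν) v = l • v
  gG_apply : ρ (gG 𝕜 ξ ν) v = m • v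

variable (𝕜 ξ ν) in
/-- For `l ^ 4 = m ^ 4 = 1`, the projector onto the simultaneous eigenspace of `a` and `g` of weight
`(l, m)`. -/
noncomputable def weightProjector (l m : 𝕜) : DAlg 𝕜 ξ ν :=
  eigenProjector 4 m (gG 𝕜 ξ ν) * eigenProjector 4 l (gA 𝕜 ξ ν)

section WeightProjector

variable {l m : 𝕜}

theorem gA_mul_weightProjector (hl : l ^ 4 = 1) :
    gA 𝕜 ξ ν * weightProjector 𝕜 ξ ν l m = l • weightProjector 𝕜 ξ ν l m := by
  have hcomm := semiconjBy_eigenProjector (gA_mul_gG (ξ := ξ) (ν := ν)) 4 m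
  have hA : gA 𝕜 ξ ν * eigenProjector 4 l (gA 𝕜 ξ ν) = l • eigenProjector 4 l (gA 𝕜 ξ ν) :=
    mul_eigenProjector (IsUnit.of_pow_eq_one hl four_ne_zero).ne_zero
      (by rw [gA_pow_four, hl, one_smul])
  rw [weightProjector, ← mul_assoc, hcomm.eq, mul_assoc, hA, mul_smul_comm]

theorem gG_mul_weightProjector (hm : m ^ 4 = 1) :
    gG 𝕜 ξ ν * weightProjector 𝕜 ξ ν l m = m • weightProjector 𝕜 ξ ν l m := by
  have hG : gG 𝕜 ξ ν * eigenProjector 4 m (gG 𝕜 ξ ν) = m • eigenProjector 4 m (gG 𝕜 ξ ν) :=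
    mul_eigenProjector (IsUnit.of_pow_eq_one hm four_ne_zero).ne_zero
      (by rw [gG_pow_four, hm, one_smul])
  rw [weightProjector, ← mul_assoc, hG, smul_mul_assoc]

theorem gC_mul_weightProjector_mul_gC (hξ : ξ ≠ 0) :
    gC 𝕜 ξ ν * (weightProjector 𝕜 ξ ν l m * gC 𝕜 ξ ν) = 0 := by
  have hG : SemiconjBy (gC 𝕜 ξ ν) (gG 𝕜 ξ ν) (-gG 𝕜 ξ ν) :=
    gC_mul_gG.trans (neg_mul (gG 𝕜 ξ ν) (gC 𝕜 ξ ν)).symm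
  have hA : SemiconjBy (gC 𝕜 ξ ν) (gA 𝕜 ξ ν) (ξ⁻¹ • gA 𝕜 ξ ν) := by
    rw [SemiconjBy, smul_mul_assoc, gA_mul_gC, inv_smul_smul₀ hξ]
  have hP := (semiconjBy_eigenProjector hG 4 m).mul_right (semiconjBy_eigenProjector hA 4 l)
  rw [weightProjector, ← mul_assoc, hP.eq, mul_assoc, gC_mul_gC, mul_zero]

theorem isHighestWeight_weightProjector_mul_gC (ρ : DAlg 𝕜 ξ ν →ₐ[𝕜] Module.End 𝕜 V)
    (hξ : ξ ≠ 0) (hl : l ^ 4 = 1) (hm : m ^ 4 = 1) (w : V) :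
    IsHighestWeight ρ l m (ρ (weightProjector 𝕜 ξ ν l m * gC 𝕜 ξ ν) w) where
  gC_apply := by
    rw [← Module.End.mul_apply, ← map_mul, gC_mul_weightProjector_mul_gC hξ, map_zero,
      LinearMap.zero_apply]
  gA_apply := by
    rw [← Module.End.mul_apply, ← map_mul, ← mul_assoc, gA_mul_weightProjector hl, smul_mul_assoc,
      map_smul, LinearMap.smul_apply]
  gG_apply := by
    rw [← Module.End.mul_apply, ← map_mul, ← mul_assoc, gG_mul_weightProjector hm, smul_mul_assoc,
      map_smul, LinearMap.smul_apply]

end WeightProjector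

/-- The scalar by which `c x` acts on a highest weight vector of nonzero weight `(l, m)`; it is also
the coefficient of `e₂` in `x e₁` for the module `V_{i,j}`, where `l = ξⁱ` and `m = ξʲ`. -/
def loweringCoeff (ξ ν l m : 𝕜) : 𝕜 :=
  ν * ξ * (l⁻¹ - m * l)

namespace IsHighestWeight

variable {ρ : DAlg 𝕜 ξ ν →ₐ[𝕜] Module.End 𝕜 V} {l m : 𝕜} {v : V}

theorem weightProjector_apply (hv : IsHighestWeight ρ l m v) (h4 : (4 : 𝕜) ≠ 0) (hl : l ≠ 0)
    (hm : m ≠ 0) : ρ (weightProjector 𝕜 ξ ν l m) v = v := by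
  rw [weightProjector, map_mul, map_eigenProjector, map_eigenProjector, Module.End.mul_apply,
    eigenProjector_apply_of_eigenvector (by exact_mod_cast h4) hl hv.gA_apply,
    eigenProjector_apply_of_eigenvector (by exact_mod_cast h4) hm hv.gG_apply]

theorem gB_apply (hv : IsHighestWeight ρ l m v) : ρ (gB 𝕜 ξ ν) v = 0 := by
  rw [← gA_mul_gA_mul_gC, map_mul, Module.End.mul_apply, hv.gC_apply, map_zero]

theorem gA_gX_apply (hv : IsHighestWeight ρ l m v) :
    ρ (gA 𝕜 ξ ν) (ρ (gX 𝕜 ξ ν) v) = (-(ξ * l)) • ρ (gX 𝕜 ξ ν) v := by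
  rw [← Module.End.mul_apply, ← map_mul, gA_mul_gX]
  simp [hv.gA_apply, hv.gB_apply, hv.gC_apply, smul_smul]

theorem gG_gX_apply (hv : IsHighestWeight ρ l m v) :
    ρ (gG 𝕜 ξ ν) (ρ (gX 𝕜 ξ ν) v) = (-m) • ρ (gX 𝕜 ξ ν) v := by
  rw [← Module.End.mul_apply, ← map_mul, gG_mul_gX]
  simp [hv.gG_apply]

theorem gX_gX_apply (hv : IsHighestWeight ρ l m v) :
    ρ (gX 𝕜 ξ ν) (ρ (gX 𝕜 ξ ν) v) = (m ^ 2 - 1) • v := by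
  rw [← Module.End.mul_apply, ← map_mul, gX_mul_gX]
  simp [hv.gG_apply, smul_smul, sub_smul, sq]

theorem gC_gX_apply (hv : IsHighestWeight ρ l m v) (hl : l ≠ 0) :
    ρ (gC 𝕜 ξ ν) (ρ (gX 𝕜 ξ ν) v) = loweringCoeff ξ ν l m • v := by
  rw [← Module.End.mul_apply, ← map_mul, gC_mul_gX, loweringCoeff]
  simp only [map_sub, map_smul, map_mul, LinearMap.sub_apply, LinearMap.smul_apply,
    Module.End.mul_apply, hv.gC_apply, hv.gA_apply, hv.gG_apply,
    gD_apply_of_gA_apply hl hv.gA_apply, map_zero]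
  module

theorem gB_gX_apply (hv : IsHighestWeight ρ l m v) (hl : l ≠ 0) :
    ρ (gB 𝕜 ξ ν) (ρ (gX 𝕜 ξ ν) v) = (loweringCoeff ξ ν l m * l ^ 2) • v := by
  rw [← gA_mul_gA_mul_gC]
  simp [hv.gC_gX_apply hl, hv.gA_apply, smul_smul, sq]

end IsHighestWeight

section Weights

variable {i j : ZMod 4}

theorem loweringCoeff_pow_val (hξ : IsPrimitiveRoot ξ 4) :
    loweringCoeff ξ ν (ξ ^ i.val) (ξ ^ j.val) =
      ν * ξ * (ξ ^ (3 * i.val) - ξ ^ (i.val + j.val)) := by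
  have hinv : (ξ ^ i.val)⁻¹ = ξ ^ (3 * i.val) :=
    inv_eq_of_mul_eq_one_left (by rw [← pow_pow_eq_one_of_pow_eq_one hξ.pow_eq_one i.val]; ring)
  rw [loweringCoeff, hinv, pow_add, mul_comm (ξ ^ j.val)]

theorem loweringCoeff_pow_val_ne_zero (hξ : IsPrimitiveRoot ξ 4) (hν : ν ≠ 0) (hij : 2 * i ≠ j) :
    loweringCoeff ξ ν (ξ ^ i.val) (ξ ^ j.val) ≠ 0 := by
  have hξ0 : ξ ≠ 0 := hξ.ne_zero four_ne_zero
  have hsq : (ξ ^ i.val) ^ 2 ≠ ξ ^ j.val := fun h =>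
    hij (pow_zmod_val_injective hξ ((pow_zmod_val_mul hξ.pow_eq_one 2 i).trans h))
  rw [loweringCoeff_pow_val hξ]
  have hfactor : ξ ^ (3 * i.val) - ξ ^ (i.val + j.val) =
      ξ ^ i.val * ((ξ ^ i.val) ^ 2 - ξ ^ j.val) := by ring
  rw [hfactor]
  exact mul_ne_zero (mul_ne_zero hν hξ0) (mul_ne_zero (pow_ne_zero _ hξ0) (sub_ne_zero.2 hsq))

theorem loweringCoeff_pow_val_mul (hξ : IsPrimitiveRoot ξ 4) (hν : ν ^ 2 = 2) :
    loweringCoeff ξ ν (ξ ^ i.val) (ξ ^ j.val) *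
      (ν * ξ / 2 * (ξ ^ i.val + ξ ^ (3 * i.val + j.val))) = (ξ ^ j.val) ^ 2 - 1 := by
  have h2 : (2 : 𝕜) ≠ 0 := fun h =>
    four_ne_zero_of_isPrimitiveRoot_four hξ (by linear_combination 2 * h)
  have hξsq := sq_eq_neg_one_of_isPrimitiveRoot_four hξ
  have hl := pow_pow_eq_one_of_pow_eq_one hξ.pow_eq_one i.val
  rw [loweringCoeff_pow_val hξ, pow_add, pow_add, mul_comm 3, pow_mul]
  generalize ξ ^ i.val = l at hl ⊢
  generalize ξ ^ j.val = m
  calc ν * ξ * (l ^ 3 - l * m) * (ν * ξ / 2 * (l + l ^ 3 * m))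
      = ν ^ 2 / 2 * ξ ^ 2 * (l ^ 4 + l ^ 4 * l ^ 2 * m - l ^ 2 * m - l ^ 4 * m ^ 2) := by ring
    _ = m ^ 2 - 1 := by rw [hν, hξsq, hl, div_self h2]; ring

end Weights

theorem IsHighestWeight.vijOn {ρ : DAlg 𝕜 ξ ν →ₐ[𝕜] Module.End 𝕜 V} {i j : ZMod 4} {v : V}
    (hξ : IsPrimitiveRoot ξ 4) (hν : ν ^ 2 = 2)
    (hs : loweringCoeff ξ ν (ξ ^ i.val) (ξ ^ j.val) ≠ 0)
    (hv : IsHighestWeight ρ (ξ ^ i.val) (ξ ^ j.val) v) :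
    VijOn ρ i j v ((loweringCoeff ξ ν (ξ ^ i.val) (ξ ^ j.val))⁻¹ • ρ (gX 𝕜 ξ ν) v) := by
  have hξ0 : ξ ≠ 0 := hξ.ne_zero four_ne_zero
  have hξsq := sq_eq_neg_one_of_isPrimitiveRoot_four hξ
  have hl0 : ξ ^ i.val ≠ 0 := pow_ne_zero _ hξ0
  have hA : ξ ^ (i.val + 3) = -(ξ * ξ ^ i.val) := by
    rw [pow_add]; linear_combination ξ ^ i.val * ξ * hξsq
  have hB : (-1 : 𝕜) ^ i.val = (ξ ^ i.val) ^ 2 := by rw [← hξsq, pow_right_comm]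
  have hD : (-(ξ * ξ ^ i.val))⁻¹ = ξ * (ξ ^ i.val)⁻¹ := by
    refine inv_eq_of_mul_eq_one_left ?_
    field_simp
    linear_combination -hξsq
  have hG : ξ ^ (j.val + 2) = -ξ ^ j.val := by rw [pow_add, hξsq, mul_neg_one]
  refine ⟨hv.gA_apply, ?_, hv.gB_apply, ?_, hv.gC_apply, ?_,
    gD_apply_of_gA_apply hl0 hv.gA_apply, ?_, hv.gG_apply, ?_, ?_, ?_⟩
  · rw [map_smul, hv.gA_gX_apply, smul_comm, hA]
  · rw [map_smul, hv.gB_gX_apply hl0, mul_smul, inv_smul_smul₀ hs, hB]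
  · rw [map_smul, hv.gC_gX_apply hl0, inv_smul_smul₀ hs]
  · rw [map_smul, gD_apply_of_gA_apply (neg_ne_zero.2 (mul_ne_zero hξ0 hl0)) hv.gA_gX_apply,
      smul_comm, hD]
  · rw [map_smul, hv.gG_gX_apply, smul_comm, hG]
  · rw [← loweringCoeff_pow_val hξ, smul_inv_smul₀ hs]
  · rw [map_smul, hv.gX_gX_apply, ← loweringCoeff_pow_val_mul hξ hν, mul_smul, inv_smul_smul₀ hs]

namespace VijOn

variable {ρ : DAlg 𝕜 ξ ν →ₐ[𝕜] Module.End 𝕜 V} {i j : ZMod 4} {e₁ e₂ : V}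

theorem isHighestWeight (h : VijOn ρ i j e₁ e₂) :
    IsHighestWeight ρ (ξ ^ i.val) (ξ ^ j.val) e₁ := by
  obtain ⟨hA, -, -, -, hC, -, -, -, hG, -⟩ := h
  exact ⟨hC, hA, hG⟩

theorem gC_apply_right (h : VijOn ρ i j e₁ e₂) : ρ (gC 𝕜 ξ ν) e₂ = e₁ := by
  obtain ⟨-, -, -, -, -, hC, -⟩ := h
  exact hC

theorem gX_apply_left (hξ : IsPrimitiveRoot ξ 4) (h : VijOn ρ i j e₁ e₂) :
    ρ (gX 𝕜 ξ ν) e₁ = loweringCoeff ξ ν (ξ ^ i.val) (ξ ^ j.val) • e₂ := by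
  obtain ⟨-, -, -, -, -, -, -, -, -, -, hX, -⟩ := h
  rw [hX, loweringCoeff_pow_val hξ]

theorem intertwines_constr {e : Module.Basis (Fin 2) 𝕜 V} {ρW : DAlg 𝕜 ξ ν →ₐ[𝕜] Module.End 𝕜 W}
    {f : Fin 2 → W} (he : VijOn ρ i j (e 0) (e 1)) (hf : VijOn ρW i j (f 0) (f 1))
    (z : DAlg 𝕜 ξ ν) (v : V) : e.constr 𝕜 f (ρ z v) = ρW z (e.constr 𝕜 f v) := by
  obtain ⟨eA₁, eA₂, eB₁, eB₂, eC₁, eC₂, eD₁, eD₂, eG₁, eG₂, eX₁, eX₂⟩ := he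
  obtain ⟨fA₁, fA₂, fB₁, fB₂, fC₁, fC₂, fD₁, fD₂, fG₁, fG₂, fX₁, fX₂⟩ := hf
  have intertwines_of_basis (y : DAlg 𝕜 ξ ν) (h₁ : e.constr 𝕜 f (ρ y (e 0)) = ρW y (f 0))
      (h₂ : e.constr 𝕜 f (ρ y (e 1)) = ρW y (f 1)) :
      ∀ v, e.constr 𝕜 f (ρ y v) = ρW y (e.constr 𝕜 f v) :=
    LinearMap.congr_fun (f := e.constr 𝕜 f ∘ₗ ρ y) (g := ρW y ∘ₗ e.constr 𝕜 f) <|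
      e.ext <| Fin.forall_fin_two.2 ⟨by simpa using h₁, by simpa using h₂⟩
  refine intertwines_of_forall_generator (fun t => ?_) z v
  cases t
  case a =>
    exact intertwines_of_basis (gA 𝕜 ξ ν) (by simp [eA₁, fA₁]) (by simp [eA₂, fA₂])
  case b =>
    exact intertwines_of_basis (gB 𝕜 ξ ν) (by simp [eB₁, fB₁]) (by simp [eB₂, fB₂])
  case c =>
    exact intertwines_of_basis (gC 𝕜 ξ ν) (by simp [eC₁, fC₁]) (by simp [eC₂, fC₂])
  case d =>
    exact intertwines_of_basis (gD 𝕜 ξ ν) (by simp [eD₁, fD₁]) (by simp [eD₂, fD₂])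
  case x =>
    exact intertwines_of_basis (gX 𝕜 ξ ν) (by simp [eX₁, fX₁]) (by simp [eX₂, fX₂])
  case g =>
    exact intertwines_of_basis (gG 𝕜 ξ ν) (by simp [eG₁, fG₁]) (by simp [eG₂, fG₂])

end VijOn

theorem exists_isHighestWeight_lift {ρV : DAlg 𝕜 ξ ν →ₐ[𝕜] Module.End 𝕜 V}
    {ρW : DAlg 𝕜 ξ ν →ₐ[𝕜] Module.End 𝕜 W} {π : W →ₗ[𝕜] V} {l m : 𝕜} {v : V}
    (hξ : ξ ≠ 0) (h4 : (4 : 𝕜) ≠ 0) (hl : l ^ 4 = 1) (hm : m ^ 4 = 1)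
    (hπ : ∀ z w, π (ρW z w) = ρV z (π w)) (hv : IsHighestWeight ρV l m v)
    (hvπ : ∃ w, ρV (gC 𝕜 ξ ν) (π w) = v) :
    ∃ w, IsHighestWeight ρW l m w ∧ π w = v := by
  obtain ⟨w, hw⟩ := hvπ
  refine ⟨_, isHighestWeight_weightProjector_mul_gC ρW hξ hl hm w, ?_⟩
  rw [hπ, map_mul, Module.End.mul_apply, hw]
  exact hv.weightProjector_apply h4 (IsUnit.of_pow_eq_one hl four_ne_zero).ne_zero
    (IsUnit.of_pow_eq_one hm four_ne_zero).ne_zero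

theorem stmt_10_general {e : Module.Basis (Fin 2) 𝕜 V} {i j : ZMod 4}
    {ρV : DAlg 𝕜 ξ ν →ₐ[𝕜] Module.End 𝕜 V} {ρW : DAlg 𝕜 ξ ν →ₐ[𝕜] Module.End 𝕜 W}
    {π : W →ₗ[𝕜] V} (hξ : IsPrimitiveRoot ξ 4) (hν : ν ^ 2 = 2) (hij : 2 * i ≠ j)
    (he : VijOn ρV i j (e 0) (e 1)) (hπ : ∀ z w, π (ρW z w) = ρV z (π w))
    (hsurj : Function.Surjective π) :
    ∃ σ : V →ₗ[𝕜] W, (∀ z v, σ (ρV z v) = ρW z (σ v)) ∧ π ∘ₗ σ = LinearMap.id := by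
  have h4 : (4 : 𝕜) ≠ 0 := four_ne_zero_of_isPrimitiveRoot_four hξ
  have hν0 : ν ≠ 0 := by
    rintro rfl
    exact h4 (by linear_combination -2 * hν)
  obtain ⟨u, hu⟩ := hsurj (e 1)
  obtain ⟨w, hw, hπw⟩ := exists_isHighestWeight_lift (hξ.ne_zero four_ne_zero) h4
    (pow_pow_eq_one_of_pow_eq_one hξ.pow_eq_one i.val)
    (pow_pow_eq_one_of_pow_eq_one hξ.pow_eq_one j.val) hπ he.isHighestWeight
    ⟨u, by rw [hu, he.gC_apply_right]⟩
  have hs := loweringCoeff_pow_val_ne_zero hξ hν0 hij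
  refine ⟨e.constr 𝕜 ![w, _], he.intertwines_constr (hw.vijOn hξ hν hs), ?_⟩
  refine e.ext (Fin.forall_fin_two.2 ⟨by simpa using hπw, ?_⟩)
  simp [hπ, hπw, he.gX_apply_left hξ, inv_smul_smul₀ hs]

/-- For every `(i,j) ∈ Λ`, the simple 2-dimensional module `V_{i,j}` is a
projective left `D`-module: every surjection of `D`-modules onto `V_{i,j}` splits
`D`-linearly (equivalently, `V_{i,j}` is its own projective cover). -/
theorem stmt_10 (𝕜 : Type) [Field 𝕜] [IsAlgClosed 𝕜] [CharZero 𝕜]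
    (ξ ν : 𝕜) (hξ : IsPrimitiveRoot ξ 4) (hν : ν ^ 2 = 2)
    (i j : ZMod 4) (hij : 2 * i ≠ j)
    (ρ : DAlg 𝕜 ξ ν →ₐ[𝕜] Module.End 𝕜 (𝕜 × 𝕜))
    (hρ : VijOn ρ i j ((1 : 𝕜), (0 : 𝕜)) ((0 : 𝕜), (1 : 𝕜))) :
    ∀ (W : Type) (_ : AddCommGroup W) (_ : Module 𝕜 W)
      (ρW : DAlg 𝕜 ξ ν →ₐ[𝕜] Module.End 𝕜 W) (π : W →ₗ[𝕜] 𝕜 × 𝕜),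
      (∀ (z : DAlg 𝕜 ξ ν) (w : W), π (ρW z w) = ρ z (π w)) →
      Function.Surjective π →
      ∃ σ : (𝕜 × 𝕜) →ₗ[𝕜] W,
        (∀ (z : DAlg 𝕜 ξ ν) (v : 𝕜 × 𝕜), σ (ρ z v) = ρW z (σ v)) ∧
        π ∘ₗ σ = LinearMap.id := by
  intro W _ _ ρW π hπ hsurj
  exact stmt_10_general (e := Module.Basis.finTwoProd 𝕜) hξ hν hij (by simpa using hρ) hπ hsurj
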